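/- Let q_s^(ℓ) and r_s^(ℓ) be the reserve and residue vectors maintained by the forward push algorithm, initialized with q_s^(ℓ) = 0 for all ℓ, r_s^(0) = e_s, and r_s^(ℓ) = 0 for ℓ ≥ 1. Then after any sequence of forward push operations, for every 0 ≤ ℓ ≤ L and every node t, p^(ℓ)(s,t) = q_s^(ℓ)(t) + Σ_{k=0}^{ℓ} Σ_{v∈V} r_s^(ℓ−k)(v) · p^(k)(v,t). -/

import Mathlib

open Matrix Finset

/-- The random-walk transition matrix `P = A D⁻¹` of a graph. -/
noncomputable def transP {V : Type*} [Fintype V] [DecidableEq V]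
    (G : SimpleGraph V) [DecidableRel G.Adj] : Matrix V V ℝ :=
  G.adjMatrix ℝ * (Matrix.diagonal fun v => (G.degree v : ℝ))⁻¹

/-- `ℓ`-step transition probability from `s` to `t`: the `(t, s)` entry of `P ^ ℓ`. -/
noncomputable def stepProb {V : Type*} [Fintype V] [DecidableEq V]
    (G : SimpleGraph V) [DecidableRel G.Adj] (ℓ : ℕ) (s t : V) : ℝ :=
  ((transP G) ^ ℓ) t s

/-- The standard initialization of the forward-push state for source `s`:
all reserves `q` are `0`, the residue is `r⁽⁰⁾ = e_s` and `r⁽ℓ⁾ = 0` for `ℓ ≥ 1`.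
The first component is the family of reserve vectors `q⁽ℓ⁾`, the second
the family of residue vectors `r⁽ℓ⁾`. -/
noncomputable def pushInit {V : Type*} [DecidableEq V] (s : V) :
    (ℕ → V → ℝ) × (ℕ → V → ℝ) :=
  (fun _ _ => 0, fun k v => if k = 0 ∧ v = s then 1 else 0)

/-- One forward push operation at node `u` and level `ℓ`:
`q⁽ℓ⁾(u) += r⁽ℓ⁾(u)`; for each neighbor `v` of `u`, `r⁽ℓ⁺¹⁾(v) += r⁽ℓ⁾(u)/d(u)`;
finally `r⁽ℓ⁾(u) := 0`. -/
noncomputable def pushOp {V : Type*} [Fintype V] [DecidableEq V]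
    (G : SimpleGraph V) [DecidableRel G.Adj]
    (σ : (ℕ → V → ℝ) × (ℕ → V → ℝ)) (u : V) (ℓ : ℕ) :
    (ℕ → V → ℝ) × (ℕ → V → ℝ) :=
  (fun k v => if k = ℓ ∧ v = u then σ.1 k v + σ.2 ℓ u else σ.1 k v,
   fun k v =>
     if k = ℓ ∧ v = u then 0
     else if k = ℓ + 1 ∧ G.Adj u v then σ.2 k v + σ.2 ℓ u / (G.degree u : ℝ)
     else σ.2 k v)

/-- The state after performing a given sequence of forward push operations. -/
noncomputable def pushRun {V : Type*} [Fintype V] [DecidableEq V]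
    (G : SimpleGraph V) [DecidableRel G.Adj]
    (σ₀ : (ℕ → V → ℝ) × (ℕ → V → ℝ)) (ops : List (V × ℕ)) :
    (ℕ → V → ℝ) × (ℕ → V → ℝ) :=
  ops.foldl (fun σ op => pushOp G σ op.1 op.2) σ₀

theorem transP_apply {V : Type*} [Fintype V] [DecidableEq V]
    (G : SimpleGraph V) [DecidableRel G.Adj] (hdeg : ∀ v : V, 0 < G.degree v) (v u : V) :
    transP G v u = if G.Adj u v then 1 / (G.degree u : ℝ) else 0 := by
  have hinv : (Matrix.diagonal fun v => (G.degree v : ℝ))⁻¹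
      = Matrix.diagonal fun v => (G.degree v : ℝ)⁻¹ := by
    apply Matrix.inv_eq_right_inv
    rw [Matrix.diagonal_mul_diagonal, ← Matrix.diagonal_one]
    congr 1
    funext w
    exact mul_inv_cancel₀ (Nat.cast_ne_zero.mpr (hdeg w).ne')
  rw [transP, hinv, Matrix.mul_diagonal, SimpleGraph.adjMatrix_apply]
  simp [G.adj_comm v u]

/-- The mass at level `ℓ` obtained by letting all residues walk on to level `ℓ`. -/
noncomputable def residueMass {V : Type*} [Fintype V] [DecidableEq V]
    (G : SimpleGraph V) [DecidableRel G.Adj] (r : ℕ → V → ℝ) (ℓ : ℕ) : V → ℝ :=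
  ∑ k ∈ Finset.range (ℓ + 1), (transP G ^ k) *ᵥ r (ℓ - k)

theorem residueMass_apply {V : Type*} [Fintype V] [DecidableEq V]
    (G : SimpleGraph V) [DecidableRel G.Adj] (r : ℕ → V → ℝ) (ℓ : ℕ) (t : V) :
    residueMass G r ℓ t
      = ∑ k ∈ Finset.range (ℓ + 1), ∑ v : V, r (ℓ - k) v * stepProb G k v t := by
  simp [residueMass, Finset.sum_apply, Matrix.mulVec, dotProduct, stepProb, mul_comm]

theorem residueMass_zero {V : Type*} [Fintype V] [DecidableEq V]
    (G : SimpleGraph V) [DecidableRel G.Adj] (r : ℕ → V → ℝ) :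
    residueMass G r 0 = r 0 := by
  simp [residueMass]

theorem residueMass_succ {V : Type*} [Fintype V] [DecidableEq V]
    (G : SimpleGraph V) [DecidableRel G.Adj] (r : ℕ → V → ℝ) (ℓ : ℕ) :
    residueMass G r (ℓ + 1) = r (ℓ + 1) + transP G *ᵥ residueMass G r ℓ := by
  rw [residueMass, Finset.sum_range_succ', residueMass, Matrix.mulVec_sum, add_comm]
  simp [pow_succ', Matrix.mulVec_mulVec]

theorem residueMass_pushInit {V : Type*} [Fintype V] [DecidableEq V]
    (G : SimpleGraph V) [DecidableRel G.Adj] (s : V) (ℓ : ℕ) :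
    residueMass G (pushInit s).2 ℓ = fun t => stepProb G ℓ s t := by
  induction ℓ with
  | zero =>
    funext t
    simp [residueMass_zero, pushInit, stepProb, Matrix.one_apply]
  | succ ℓ ih =>
    rw [residueMass_succ, ih]
    funext t
    simp [pushInit, stepProb, pow_succ', Matrix.mul_apply, Matrix.mulVec, dotProduct]

theorem residueMass_pushOp {V : Type*} [Fintype V] [DecidableEq V]
    (G : SimpleGraph V) [DecidableRel G.Adj] (hdeg : ∀ v : V, 0 < G.degree v)
    (σ : (ℕ → V → ℝ) × (ℕ → V → ℝ)) (u : V) (m ℓ : ℕ) :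
    residueMass G (pushOp G σ u m).2 ℓ
      = residueMass G σ.2 ℓ - if ℓ = m then Pi.single u (σ.2 m u) else 0 := by
  induction ℓ with
  | zero =>
    rw [residueMass_zero, residueMass_zero]
    funext t
    by_cases hm : 0 = m <;> by_cases ht : t = u <;> subst_vars <;> simp [pushOp, *]
  | succ ℓ ih =>
    rw [residueMass_succ, residueMass_succ, ih, Matrix.mulVec_sub]
    funext t
    by_cases hm : ℓ = m
    · subst hm
      simp only [pushOp, Pi.add_apply, Pi.sub_apply, if_true, Matrix.mulVec_single,
        Matrix.col_apply, Pi.smul_apply, MulOpposite.smul_eq_mul_unop, MulOpposite.unop_op,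
        transP_apply G hdeg]
      by_cases h : G.Adj u t <;> simp [h]; ring
    · by_cases hs : ℓ + 1 = m <;> by_cases ht : t = u <;> subst_vars <;> simp [pushOp, *]

theorem reserve_add_residueMass_pushOp {V : Type*} [Fintype V] [DecidableEq V]
    (G : SimpleGraph V) [DecidableRel G.Adj] (hdeg : ∀ v : V, 0 < G.degree v)
    (σ : (ℕ → V → ℝ) × (ℕ → V → ℝ)) (u : V) (m ℓ : ℕ) :
    (pushOp G σ u m).1 ℓ + residueMass G (pushOp G σ u m).2 ℓ
      = σ.1 ℓ + residueMass G σ.2 ℓ := by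
  rw [residueMass_pushOp G hdeg]
  funext t
  by_cases hm : ℓ = m <;> by_cases ht : t = u <;> subst_vars <;> simp [pushOp, *]

theorem reserve_add_residueMass_pushRun {V : Type*} [Fintype V] [DecidableEq V]
    (G : SimpleGraph V) [DecidableRel G.Adj] (hdeg : ∀ v : V, 0 < G.degree v)
    (σ : (ℕ → V → ℝ) × (ℕ → V → ℝ)) (ops : List (V × ℕ)) (ℓ : ℕ) :
    (pushRun G σ ops).1 ℓ + residueMass G (pushRun G σ ops).2 ℓ
      = σ.1 ℓ + residueMass G σ.2 ℓ := by
  induction ops generalizing σ with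
  | nil => rfl
  | cons op ops ih =>
    exact (ih (pushOp G σ op.1 op.2)).trans (reserve_add_residueMass_pushOp G hdeg σ op.1 op.2 ℓ)

/-- Forward-push invariant (Banerjee et al.): after any sequence of push
operations from the standard initialization at `s`, for all `0 ≤ ℓ ≤ L` and `t`,
`p⁽ℓ⁾(s,t) = q_s⁽ℓ⁾(t) + Σ_{k=0}^{ℓ} Σ_{v} r_s^{(ℓ-k)}(v) p⁽ᵏ⁾(v,t)`. -/
theorem push_invariant {V : Type*} [Fintype V] [DecidableEq V]
    (G : SimpleGraph V) [DecidableRel G.Adj]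
    (hdeg : ∀ v : V, 0 < G.degree v) (s : V) (L : ℕ) (ops : List (V × ℕ)) :
    ∀ ℓ ≤ L, ∀ t : V,
      stepProb G ℓ s t =
        (pushRun G (pushInit s) ops).1 ℓ t
          + ∑ k ∈ Finset.range (ℓ + 1), ∑ v : V,
              (pushRun G (pushInit s) ops).2 (ℓ - k) v * stepProb G k v t := by
  intro ℓ _ t
  rw [← residueMass_apply, ← Pi.add_apply, reserve_add_residueMass_pushRun G hdeg,
    residueMass_pushInit]
  simp [pushInit]
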